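/- Let N ≥ 2, α ∈ (1,2), let g : S^{N-1} → (0,∞) be continuous and even, and set J(z) = g(z/|z|) |z|^{-(N+α)} for z ≠ 0. Let q : ℝ → ℝ be C¹ and nondecreasing with limits m₋ at −∞ and m₊ at +∞ and with q'(r) ≤ C_q (1+|r|)^{-(2+α)} for all r, for some C_q > 0. Let d : ℝ^N → ℝ be globally 1-Lipschitz and C² on an open neighborhood of a point x, with |Dd| = 1 on that neighborhood; set e = Dd(x) and W_ε(z) = ( d(x+εz) − d(x) − ε Dd(x)·z ) / ε². Then for every sufficiently small ε > 0 the integral ā_ε = (1/ε) ∫_{ℝ^N} ∫_ℝ q'(ξ) [ q( ξ + e·z + ε W_ε(z) ) − q( ξ + e·z ) ] dξ J(z) dz is absolutely convergent, and as ε → 0⁺, ā_ε → (1/2) ( ∫_ℝ Φ(s) |s|^{1−α} ds ) · tr( M_g(e) D²d(x) ), where Φ(s) = ∫_ℝ q'(ξ) q'(ξ+s) dξ (and the integral ∫_ℝ Φ(s)|s|^{1−α} ds is finite). -/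

import Mathlib

open MeasureTheory Metric Filter
open scoped RealInnerProductSpace Topology

/-!
Integrating in `ξ` first replaces `q` by `G(s) = ∫ q'(ξ) q(ξ + s) dξ`, which is again bounded and
nondecreasing, with `G' = Φ`. For fixed `z` the integrand has constant sign in `ξ`, so absolute
convergence is a question about `F_ε(z) = ε⁻¹ (G(e·z + εW_ε(z)) − G(e·z)) J(z)` alone.

Put `β = N + α − 2`. Since `|W_ε(z)| ≤ L|z|²` where `|εz|` is small and `ε⁻¹ = O(|z|)` elsewhere,
`F_ε(z)` is `O(|z|^{-β})` uniformly in `ε`, so its mass on the line `v + ℝe`, `v ⊥ e`, is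
`O(|v|^{1-β})`. This mass is also `O(|v|^{-β})`: where `|εz|` is small, `|G(s + εW_ε) − G(s)|` is at
most `h(s) ∫_{-1}^1 G'(s + t h(s)) dt` with `h(s) = Lε(s² + |v|²)` of slope at most `1/2`, and `G'`
has bounded mass along each of the curves `s ↦ s + t h(s)`; elsewhere `F_ε(z)` is `O(|z|^{-β-1})`.
As `N − 1 < β < N`, the smaller of the two bounds is integrable over `e^⊥`, and dominated
convergence applies.

By Taylor's formula the limit integrand is `½ (D²d(x) z·z) Φ(e·z) J(z)`, and homogeneity of `J`
scales its integral over the slice `e·z = s` back to the slice `e·z = 1`.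
-/

/-- The cross-correlation `s ↦ ∫ f(ξ) g(ξ + s) dξ`; the function `Φ` of the theorem is
`crossCorr (deriv q) (deriv q)`. -/
noncomputable def crossCorr (f g : ℝ → ℝ) (s : ℝ) : ℝ := ∫ ξ : ℝ, f ξ * g (ξ + s)

section CrossCorr

variable {f g : ℝ → ℝ} {B K : ℝ}

theorem integrable_mul_comp_add (hf : Integrable f) (hg : Continuous g)
    (hB : ∀ r, |g r| ≤ B) (s : ℝ) : Integrable fun ξ => f ξ * g (ξ + s) :=
  hf.mul_bdd (c := B) (Continuous.aestronglyMeasurable (by fun_prop)) (.of_forall fun _ => hB _)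

theorem abs_crossCorr_le (hf : Integrable f) (hB : ∀ r, |g r| ≤ B) (s : ℝ) :
    |crossCorr f g s| ≤ (∫ ξ, |f ξ|) * B := by
  rw [← integral_mul_const, ← Real.norm_eq_abs]
  refine norm_integral_le_of_norm_le (hf.abs.mul_const B) (.of_forall fun ξ => ?_)
  rw [norm_mul, Real.norm_eq_abs, Real.norm_eq_abs]
  gcongr
  exact hB _

theorem continuous_crossCorr (hf : Integrable f) (hg : Continuous g) (hB : ∀ r, |g r| ≤ B) :
    Continuous (crossCorr f g) := by
  refine continuous_of_dominated (bound := fun ξ => |f ξ| * B)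
    (fun s => (integrable_mul_comp_add hf hg hB s).aestronglyMeasurable) (fun s => ?_)
    (hf.abs.mul_const B) (.of_forall fun ξ => by fun_prop)
  refine .of_forall fun ξ => ?_
  rw [norm_mul, Real.norm_eq_abs, Real.norm_eq_abs]
  gcongr
  exact hB _

theorem hasDerivAt_crossCorr (hf : Integrable f) (hg : ContDiff ℝ 1 g)
    (hB : ∀ r, |g r| ≤ B) (hK : ∀ r, |deriv g r| ≤ K) (s : ℝ) :
    HasDerivAt (crossCorr f g) (crossCorr f (deriv g) s) s := by
  refine (hasDerivAt_integral_of_dominated_loc_of_deriv_le (s := Set.univ)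
    (F := fun s ξ => f ξ * g (ξ + s)) (F' := fun s ξ => f ξ * deriv g (ξ + s))
    (bound := fun ξ => |f ξ| * K) univ_mem
    (.of_forall fun s => (integrable_mul_comp_add hf hg.continuous hB s).aestronglyMeasurable)
    (integrable_mul_comp_add hf hg.continuous hB s)
    (integrable_mul_comp_add hf (hg.continuous_deriv le_rfl) hK s).aestronglyMeasurable
    (.of_forall fun ξ s _ => ?_) (hf.abs.mul_const K) (.of_forall fun ξ s _ => ?_)).2
  · rw [norm_mul, Real.norm_eq_abs, Real.norm_eq_abs]
    gcongr
    exact hK _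
  · exact ((hg.differentiable one_ne_zero _).hasDerivAt.comp_const_add ξ s).const_mul _

theorem integral_mul_increment (hf : Integrable f) (hg : Continuous g)
    (hB : ∀ r, |g r| ≤ B) (s h : ℝ) :
    ∫ ξ, f ξ * (g (ξ + s + h) - g (ξ + s)) = crossCorr f g (s + h) - crossCorr f g s := by
  simp only [crossCorr, mul_sub, add_assoc]
  exact integral_sub (integrable_mul_comp_add hf hg hB _) (integrable_mul_comp_add hf hg hB _)

theorem integral_abs_mul_increment (hf : Integrable f) (hf₀ : 0 ≤ f) (hg : Continuous g)
    (hmono : Monotone g) (hB : ∀ r, |g r| ≤ B) (s h : ℝ) :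
    ∫ ξ, |f ξ * (g (ξ + s + h) - g (ξ + s))| = |crossCorr f g (s + h) - crossCorr f g s| := by
  rw [← integral_mul_increment hf hg hB]
  rcases le_total 0 h with hh | hh
  · have hpos : ∀ ξ, 0 ≤ f ξ * (g (ξ + s + h) - g (ξ + s)) := fun ξ =>
      mul_nonneg (hf₀ ξ) (sub_nonneg.2 (hmono (by linarith)))
    rw [abs_of_nonneg (integral_nonneg hpos)]
    simp only [abs_of_nonneg (hpos _)]
  · have hneg : ∀ ξ, f ξ * (g (ξ + s + h) - g (ξ + s)) ≤ 0 := fun ξ =>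
      mul_nonpos_of_nonneg_of_nonpos (hf₀ ξ) (sub_nonpos.2 (hmono (by linarith)))
    rw [abs_of_nonpos (integral_nonpos hneg), ← integral_neg]
    simp only [abs_of_nonpos (hneg _)]

end CrossCorr

/-- A bounded nondecreasing `C¹` profile with bounded slope. The class contains the wave `q` and is
stable under correlation with `q'`, so it also contains the primitive
`crossCorr (deriv q) q` of the autocorrelation of `q'`. -/
structure BoundedWave (B K : ℝ) (q : ℝ → ℝ) : Prop where
  contDiff : ContDiff ℝ 1 q
  monotone : Monotone q
  abs_le_bound : ∀ r, |q r| ≤ B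
  deriv_le_bound : ∀ r, deriv q r ≤ K

namespace BoundedWave

theorem of_tendsto {q : ℝ → ℝ} (hq : ContDiff ℝ 1 q) (hmono : Monotone q) {m₁ m₂ K : ℝ}
    (hbot : Tendsto q atBot (𝓝 m₁)) (htop : Tendsto q atTop (𝓝 m₂))
    (hK : ∀ r, deriv q r ≤ K) : BoundedWave (max |m₁| |m₂|) K q where
  contDiff := hq
  monotone := hmono
  abs_le_bound r := abs_le_max_abs_abs (hmono.le_of_tendsto hbot r) (hmono.ge_of_tendsto htop r)
  deriv_le_bound := hK

variable {B K : ℝ} {q : ℝ → ℝ} (hq : BoundedWave B K q)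
include hq

theorem continuous_deriv : Continuous (deriv q) := hq.contDiff.continuous_deriv le_rfl

theorem hasDerivAt (s : ℝ) : HasDerivAt q (deriv q s) s :=
  (hq.contDiff.differentiable one_ne_zero s).hasDerivAt

theorem deriv_nonneg (s : ℝ) : 0 ≤ deriv q s := hq.monotone.deriv_nonneg

theorem abs_deriv_le (s : ℝ) : |deriv q s| ≤ K :=
  (abs_of_nonneg (hq.deriv_nonneg s)).trans_le (hq.deriv_le_bound s)

theorem bound_nonneg : 0 ≤ B := (abs_nonneg _).trans (hq.abs_le_bound 0)

theorem slope_bound_nonneg : 0 ≤ K := (hq.deriv_nonneg 0).trans (hq.deriv_le_bound 0)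

theorem abs_sub_le (s t : ℝ) : |q s - q t| ≤ 2 * B :=
  (abs_sub _ _).trans (by linarith [hq.abs_le_bound s, hq.abs_le_bound t])

theorem integrable_deriv : Integrable (deriv q) := by
  refine integrable_of_intervalIntegral_norm_bounded (2 * B)
    (fun n : ℕ => hq.continuous_deriv.integrableOn_Ioc)
    (tendsto_neg_atTop_atBot.comp tendsto_natCast_atTop_atTop) tendsto_natCast_atTop_atTop
    (.of_forall fun n => ?_)
  simp only [Function.comp_apply, Real.norm_of_nonneg (hq.deriv_nonneg _)]
  rw [intervalIntegral.integral_deriv_eq_sub' q rfl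
    (fun s _ => (hq.hasDerivAt s).differentiableAt) hq.continuous_deriv.continuousOn]
  exact (le_abs_self _).trans (hq.abs_sub_le _ _)

theorem deriv_crossCorr : deriv (crossCorr (deriv q) q) = crossCorr (deriv q) (deriv q) :=
  funext fun s =>
    (hasDerivAt_crossCorr hq.integrable_deriv hq.contDiff hq.abs_le_bound hq.abs_deriv_le s).deriv

theorem crossCorr_deriv :
    BoundedWave ((∫ ξ, |deriv q ξ|) * B) ((∫ ξ, |deriv q ξ|) * K) (crossCorr (deriv q) q) where
  contDiff := contDiff_one_iff_deriv.2
    ⟨fun s => (hasDerivAt_crossCorr hq.integrable_deriv hq.contDiff hq.abs_le_bound hq.abs_deriv_le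
      s).differentiableAt, hq.deriv_crossCorr ▸
      continuous_crossCorr hq.integrable_deriv hq.continuous_deriv hq.abs_deriv_le⟩
  monotone s t hst := integral_mono
    (integrable_mul_comp_add hq.integrable_deriv hq.contDiff.continuous hq.abs_le_bound s)
    (integrable_mul_comp_add hq.integrable_deriv hq.contDiff.continuous hq.abs_le_bound t)
    fun ξ => mul_le_mul_of_nonneg_left (hq.monotone (by linarith)) (hq.deriv_nonneg ξ)
  abs_le_bound := abs_crossCorr_le hq.integrable_deriv hq.abs_le_bound
  deriv_le_bound s := hq.deriv_crossCorr ▸ (le_abs_self _).trans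
    (abs_crossCorr_le hq.integrable_deriv hq.abs_deriv_le s)

theorem sub_eq_mul_integral_deriv (s h : ℝ) :
    q (s + h) - q (s - h) = h * ∫ t in (-1 : ℝ)..1, deriv q (s + t * h) := by
  have hderiv : ∀ t, HasDerivAt (fun t => q (s + t * h)) (deriv q (s + t * h) * h) t := fun t =>
    (hq.hasDerivAt _).comp t (by simpa using ((hasDerivAt_id t).mul_const h).const_add s)
  have := hq.continuous_deriv
  have hFTC := intervalIntegral.integral_eq_sub_of_hasDerivAt (a := -1) (b := 1)
    (fun t _ => hderiv t) (Continuous.intervalIntegrable (by fun_prop) _ _)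
  rw [intervalIntegral.integral_mul_const] at hFTC
  rw [mul_comm, hFTC]
  ring_nf

theorem abs_increment_le {p h : ℝ} (hp : |p| ≤ h) (s : ℝ) :
    |q (s + p) - q s| ≤ h * ∫ t in (-1 : ℝ)..1, deriv q (s + t * h) := by
  have hh : 0 ≤ h := (abs_nonneg p).trans hp
  rw [← hq.sub_eq_mul_integral_deriv, abs_le]
  have := abs_le.1 hp
  have h₁ := hq.monotone (show s + p ≤ s + h by linarith)
  have h₂ := hq.monotone (show s - h ≤ s + p by linarith)
  have h₃ := hq.monotone (show s ≤ s + h by linarith)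
  have h₄ := hq.monotone (show s - h ≤ s by linarith)
  constructor <;> linarith

theorem integral_deriv_segment_le (s h : ℝ) :
    ∫ t in (-1 : ℝ)..1, deriv q (s + t * h) ≤ 2 * K := by
  have := hq.continuous_deriv
  calc ∫ t in (-1 : ℝ)..1, deriv q (s + t * h) ≤ ∫ _ in (-1 : ℝ)..1, K :=
        intervalIntegral.integral_mono_on (by norm_num)
          (Continuous.intervalIntegrable (by fun_prop) _ _) (by simp) fun _ _ => hq.deriv_le_bound _
    _ = 2 * K := by rw [intervalIntegral.integral_const, smul_eq_mul]; norm_num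

theorem integral_deriv_comp_le {ψ ψ' : ℝ → ℝ} {a b : ℝ} (hab : a ≤ b)
    (hψ : ∀ s, HasDerivAt ψ (ψ' s) s) (hψ' : Continuous ψ')
    (hlow : ∀ s ∈ Set.Icc a b, 1 / 2 ≤ ψ' s) :
    ∫ s in a..b, deriv q (ψ s) ≤ 4 * B := by
  have hψc : Continuous ψ := continuous_iff_continuousAt.2 fun s => (hψ s).continuousAt
  have := hq.continuous_deriv
  calc ∫ s in a..b, deriv q (ψ s) ≤ ∫ s in a..b, 2 * (deriv q (ψ s) * ψ' s) := by
        refine intervalIntegral.integral_mono_on hab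
          (Continuous.intervalIntegrable (by fun_prop) _ _)
          (Continuous.intervalIntegrable (by fun_prop) _ _) fun s hs => ?_
        nlinarith [hq.deriv_nonneg (ψ s), hlow s hs]
    _ = 2 * (q (ψ b) - q (ψ a)) := by
        rw [intervalIntegral.integral_const_mul, intervalIntegral.integral_eq_sub_of_hasDerivAt
          (fun s _ => (hq.hasDerivAt _).comp s (hψ s))
          (Continuous.intervalIntegrable (by fun_prop) _ _)]
        rfl
    _ ≤ 4 * B := by linarith [(le_abs_self _).trans (hq.abs_sub_le (ψ b) (ψ a))]

/-- For each `t ∈ [-1, 1]` the map `s ↦ s + t η(s)` has slope at least `1/2`. -/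
theorem integral_segment_shear_le {η η' : ℝ → ℝ} {a b : ℝ} (hab : a ≤ b)
    (hη : ∀ s, HasDerivAt η (η' s) s) (hη' : Continuous η')
    (hsmall : ∀ s ∈ Set.Icc a b, |η' s| ≤ 1 / 2) :
    ∫ s in a..b, ∫ t in (-1 : ℝ)..1, deriv q (s + t * η s) ≤ 8 * B := by
  have hηc : Continuous η := continuous_iff_continuousAt.2 fun s => (hη s).continuousAt
  have := hq.continuous_deriv
  rw [intervalIntegral_intervalIntegral_swap]
  · calc ∫ t in (-1 : ℝ)..1, ∫ s in a..b, deriv q (s + t * η s)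
        ≤ ∫ _ in (-1 : ℝ)..1, 4 * B := by
          refine intervalIntegral.integral_mono_on (by norm_num) ?_ (by simp) fun t ht => ?_
          · exact (intervalIntegral.continuous_parametric_intervalIntegral_of_continuous'
              (by fun_prop) _ _).intervalIntegrable _ _
          · refine hq.integral_deriv_comp_le (ψ' := fun s => 1 + t * η' s) hab
              (fun s => (hasDerivAt_id s).add ((hη s).const_mul t)) (by fun_prop) fun s hs => ?_
            have hprod : |t * η' s| ≤ 1 * (1 / 2) := by
              rw [abs_mul]
              gcongr
              exacts [abs_le.2 ht, hsmall s hs]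
            linarith [(abs_le.1 hprod).1]
      _ = 8 * B := by rw [intervalIntegral.integral_const, smul_eq_mul]; ring
  · rw [Measure.volume_eq_prod]
    exact ((Continuous.continuousOn (by fun_prop)).integrableOn_compact
      (isCompact_uIcc.prod isCompact_uIcc)).mono_set
      (Set.prod_mono Set.uIoc_subset_uIcc Set.uIoc_subset_uIcc)

end BoundedWave

/-- The weight `|s|^c` is integrable near `0` and at most `1` away from it. -/
theorem integrable_mul_abs_rpow {Φ : ℝ → ℝ} {c K : ℝ} (hc : -1 < c) (hc₀ : c ≤ 0)
    (hΦ : Integrable Φ) (hK : ∀ s, |Φ s| ≤ K) : Integrable fun s => Φ s * |s| ^ c := by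
  have hmeas : AEStronglyMeasurable (fun s => Φ s * |s| ^ c) volume :=
    hΦ.aestronglyMeasurable.mul (Measurable.aestronglyMeasurable (by fun_prop))
  have hnorm : ∀ s, ‖Φ s * |s| ^ c‖ = |Φ s| * |s| ^ c := fun s => by
    rw [norm_mul, Real.norm_eq_abs, Real.norm_of_nonneg (by positivity)]
  rw [← integrableOn_univ, ← Set.union_compl_self (ball (0 : ℝ) 1)]
  refine IntegrableOn.union ?_ ?_
  · refine integrableOn_ball_of_norm_le_rpow (C := K) (α := -c) (by simp) (by simp; linarith)
      (.of_forall fun s => ?_) hmeas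
    rw [hnorm, neg_neg, Real.norm_eq_abs]
    gcongr
    exact hK s
  · refine Integrable.mono hΦ.integrableOn hmeas.restrict
      (ae_restrict_of_forall_mem measurableSet_ball.compl fun s hs => ?_)
    rw [hnorm, Real.norm_eq_abs]
    refine mul_le_of_le_one_right (abs_nonneg _) (Real.rpow_le_one_of_one_le_of_nonpos ?_ hc₀)
    simpa using hs

/-- The constant `∫ (1 + s²)^{-β/2} ds`: the mass of `|·|^{-β}` on a line at distance `1` from the
origin. -/
noncomputable def lineConst (β : ℝ) : ℝ := ∫ s : ℝ, (1 + ‖s‖ ^ 2) ^ (-β / 2)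

theorem lineConst_nonneg (β : ℝ) : 0 ≤ lineConst β :=
  integral_nonneg fun s => by positivity

theorem sq_add_sq_rpow_eq (β : ℝ) {r : ℝ} (hr : 0 < r) (s : ℝ) :
    (s ^ 2 + r ^ 2) ^ (-β / 2) = r ^ (-β) * (1 + ‖s / r‖ ^ 2) ^ (-β / 2) := by
  have hfactor : s ^ 2 + r ^ 2 = r ^ 2 * (1 + ‖s / r‖ ^ 2) := by
    rw [Real.norm_eq_abs, sq_abs]
    field_simp
    ring
  rw [hfactor, Real.mul_rpow (by positivity) (by positivity), ← Real.rpow_natCast_mul hr.le]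
  congr 2
  push_cast
  ring

theorem integrable_sq_add_sq_rpow {β r : ℝ} (hβ : 1 < β) (hr : 0 < r) :
    Integrable fun s : ℝ => (s ^ 2 + r ^ 2) ^ (-β / 2) := by
  simp_rw [sq_add_sq_rpow_eq β hr]
  exact ((integrable_rpow_neg_one_add_norm_sq (E := ℝ) (by simpa)).comp_div hr.ne').const_mul _

theorem integral_sq_add_sq_rpow (β : ℝ) {r : ℝ} (hr : 0 < r) :
    ∫ s : ℝ, (s ^ 2 + r ^ 2) ^ (-β / 2) = lineConst β * r ^ (1 - β) := by
  simp_rw [sq_add_sq_rpow_eq β hr]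
  rw [integral_const_mul, Measure.integral_comp_div (fun s : ℝ => (1 + ‖s‖ ^ 2) ^ (-β / 2)) r,
    abs_of_pos hr, smul_eq_mul, lineConst, sub_eq_neg_add, Real.rpow_add_one hr.ne']
  ring

section LineBounds

variable {V : Type*} [NormedAddCommGroup V] [MeasurableSpace V]

/-- Bounds for a function `F` on `V × ℝ` along the lines `{v} × ℝ`: pointwise by
`A |(v,s)|^{-β}`, and in total mass by `M |v|^{-β}`. The first bound also controls the mass, by
a multiple of `|v|^{1-β}`; for `dim V < β < dim V + 1` the two bounds on the mass are
integrable at infinity and near `0` respectively. -/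
structure LineBounds (A M β : ℝ) (F : V × ℝ → ℝ) : Prop where
  measurable : Measurable F
  abs_le : ∀ v : V, v ≠ 0 → ∀ s : ℝ, |F (v, s)| ≤ A * (s ^ 2 + ‖v‖ ^ 2) ^ (-β / 2)
  integral_abs_le : ∀ v : V, v ≠ 0 → ∫ s : ℝ, |F (v, s)| ≤ M * ‖v‖ ^ (-β)

/-- The majorant of the mass of the line through `v`, in terms of `r = |v|`. -/
noncomputable def lineMajorant (A M β r : ℝ) : ℝ :=
  min (A * lineConst β * r ^ (-(β - 1))) (M * r ^ (-β))

namespace LineBounds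

variable {A M β : ℝ}

theorem nonneg [Nontrivial V] {F : V × ℝ → ℝ} (hF : LineBounds A M β F) : 0 ≤ A ∧ 0 ≤ M := by
  obtain ⟨v, hv⟩ := exists_ne (0 : V)
  exact ⟨nonneg_of_mul_nonneg_left ((abs_nonneg _).trans (hF.abs_le v hv 0)) (by positivity),
    nonneg_of_mul_nonneg_left ((integral_nonneg fun _ => abs_nonneg _).trans
      (hF.integral_abs_le v hv)) (by positivity)⟩

theorem integrable_line {F : V × ℝ → ℝ} (hF : LineBounds A M β F) (hβ : 1 < β) {v : V}
    (hv : v ≠ 0) : Integrable fun s : ℝ => F (v, s) :=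
  ((integrable_sq_add_sq_rpow hβ (norm_pos_iff.2 hv)).const_mul A).mono'
    (hF.measurable.comp measurable_prodMk_left).aestronglyMeasurable (.of_forall (hF.abs_le v hv))

theorem integral_abs_le_lineMajorant {F : V × ℝ → ℝ} (hF : LineBounds A M β F) (hβ : 1 < β)
    {v : V} (hv : v ≠ 0) : ∫ s : ℝ, |F (v, s)| ≤ lineMajorant A M β ‖v‖ := by
  have hv' := norm_pos_iff.2 hv
  refine le_min ?_ (hF.integral_abs_le v hv)
  calc ∫ s : ℝ, |F (v, s)| ≤ ∫ s : ℝ, A * (s ^ 2 + ‖v‖ ^ 2) ^ (-β / 2) :=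
        integral_mono (hF.integrable_line hβ hv).abs
          ((integrable_sq_add_sq_rpow hβ hv').const_mul A) (hF.abs_le v hv)
    _ = A * lineConst β * ‖v‖ ^ (-(β - 1)) := by
        rw [integral_const_mul, integral_sq_add_sq_rpow β hv', mul_assoc, neg_sub]

variable {ι : Type*} {l : Filter ι} [l.NeBot] [l.IsCountablyGenerated]
  {F : ι → V × ℝ → ℝ} {F₀ : V × ℝ → ℝ}

theorem of_tendsto (hF : ∀ᶠ i in l, LineBounds A M β (F i)) (hβ : 1 < β)
    (hF₀ : Measurable F₀)
    (hlim : ∀ v : V, v ≠ 0 → ∀ s, Tendsto (fun i => F i (v, s)) l (𝓝 (F₀ (v, s)))) :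
    LineBounds A M β F₀ where
  measurable := hF₀
  abs_le v hv s := le_of_tendsto (hlim v hv s).abs (hF.mono fun i hi => hi.abs_le v hv s)
  integral_abs_le v hv := by
    refine le_of_tendsto (tendsto_integral_filter_of_dominated_convergence _
      (hF.mono fun i hi => (hi.integrable_line hβ hv).abs.aestronglyMeasurable)
      (hF.mono fun i hi => .of_forall fun s => ?_)
      ((integrable_sq_add_sq_rpow hβ (norm_pos_iff.2 hv)).const_mul A)
      (.of_forall fun s => (hlim v hv s).abs)) (hF.mono fun i hi => hi.integral_abs_le v hv)
    rw [Real.norm_eq_abs, abs_abs]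
    exact hi.abs_le v hv s

end LineBounds

end LineBounds

theorem one_lt_of_finrank_lt {V : Type*} [AddCommGroup V] [Module ℝ V] [FiniteDimensional ℝ V]
    [Nontrivial V] {β : ℝ} (h : (Module.finrank ℝ V : ℝ) < β) : 1 < β :=
  lt_of_le_of_lt (by exact_mod_cast Module.finrank_pos (R := ℝ) (M := V)) h

section Integration

variable {V : Type*} [NormedAddCommGroup V] [NormedSpace ℝ V] [FiniteDimensional ℝ V]
  [Nontrivial V] [MeasurableSpace V] [BorelSpace V] (μ : Measure V) [μ.IsAddHaarMeasure]

theorem integrable_min_mul_norm_rpow {A M a b : ℝ} (hA : 0 ≤ A) (hM : 0 ≤ M)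
    (ha : a < Module.finrank ℝ V) (hb : (Module.finrank ℝ V : ℝ) < b) :
    Integrable (fun v : V => min (A * ‖v‖ ^ (-a)) (M * ‖v‖ ^ (-b))) μ := by
  have hb₀ : -b ≤ 0 := by linarith [one_lt_of_finrank_lt hb]
  have hmeas : Measurable fun v : V => min (A * ‖v‖ ^ (-a)) (M * ‖v‖ ^ (-b)) := by fun_prop
  have hnorm : ∀ v : V, ‖min (A * ‖v‖ ^ (-a)) (M * ‖v‖ ^ (-b))‖ =
      min (A * ‖v‖ ^ (-a)) (M * ‖v‖ ^ (-b)) := fun v => Real.norm_of_nonneg (by positivity)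
  rw [← integrableOn_univ, ← Set.union_compl_self (ball (0 : V) 1)]
  refine IntegrableOn.union ?_ ?_
  · exact integrableOn_ball_of_norm_le_rpow Module.finrank_pos ha
      (.of_forall fun v => (hnorm v).trans_le (min_le_left _ _)) hmeas.aestronglyMeasurable
  · refine Integrable.mono' ((integrable_one_add_norm hb).const_mul (M * 2 ^ b)).integrableOn
      hmeas.aestronglyMeasurable
      (ae_restrict_of_forall_mem measurableSet_ball.compl fun v hv => ?_)
    have hv : 1 ≤ ‖v‖ := by simpa using hv
    rw [hnorm, mul_assoc]
    refine (min_le_right _ _).trans (mul_le_mul_of_nonneg_left ?_ hM)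
    calc ‖v‖ ^ (-b) ≤ ((1 + ‖v‖) / 2) ^ (-b) :=
          Real.rpow_le_rpow_of_nonpos (by positivity) (by linarith) hb₀
      _ = 2 ^ b * (1 + ‖v‖) ^ (-b) := by
          rw [Real.div_rpow (by positivity) (by positivity), Real.rpow_neg zero_le_two,
            div_inv_eq_mul, mul_comm]

namespace LineBounds

variable {A M β : ℝ}

theorem integrable_lineMajorant (hA : 0 ≤ A) (hM : 0 ≤ M) (h₁ : (Module.finrank ℝ V : ℝ) < β)
    (h₂ : β < Module.finrank ℝ V + 1) : Integrable (fun v : V => lineMajorant A M β ‖v‖) μ :=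
  integrable_min_mul_norm_rpow μ (mul_nonneg hA (lineConst_nonneg β)) hM (by linarith) h₁

theorem integrable {F : V × ℝ → ℝ} (hF : LineBounds A M β F)
    (h₁ : (Module.finrank ℝ V : ℝ) < β) (h₂ : β < Module.finrank ℝ V + 1) :
    Integrable F (μ.prod volume) := by
  have hβ := one_lt_of_finrank_lt h₁
  have hmeas := hF.measurable.aestronglyMeasurable (μ := μ.prod volume)
  have hne : ∀ᵐ v ∂μ, v ≠ 0 := Measure.ae_ne μ 0
  refine (integrable_prod_iff hmeas).2 ⟨hne.mono fun v hv => hF.integrable_line hβ hv, ?_⟩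
  refine (integrable_lineMajorant μ hF.nonneg.1 hF.nonneg.2 h₁ h₂).mono'
    hmeas.norm.integral_prod_right' (hne.mono fun v hv => ?_)
  rw [Real.norm_of_nonneg (integral_nonneg fun _ => norm_nonneg _)]
  exact hF.integral_abs_le_lineMajorant hβ hv

/-- Dominated convergence on each line, then in `v` with the majorant `lineMajorant`. -/
theorem tendsto_integral {ι : Type*} {l : Filter ι} [l.NeBot] [l.IsCountablyGenerated]
    {F : ι → V × ℝ → ℝ} {F₀ : V × ℝ → ℝ} (hF : ∀ᶠ i in l, LineBounds A M β (F i))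
    (hF₀ : Measurable F₀) (h₁ : (Module.finrank ℝ V : ℝ) < β) (h₂ : β < Module.finrank ℝ V + 1)
    (hlim : ∀ v : V, v ≠ 0 → ∀ s, Tendsto (fun i => F i (v, s)) l (𝓝 (F₀ (v, s)))) :
    Tendsto (fun i => ∫ p, F i p ∂μ.prod volume) l (𝓝 (∫ p, F₀ p ∂μ.prod volume)) := by
  have hβ := one_lt_of_finrank_lt h₁
  have hne : ∀ᵐ v ∂μ, v ≠ 0 := Measure.ae_ne μ 0
  have hF₀' := of_tendsto hF hβ hF₀ hlim
  rw [integral_prod _ (hF₀'.integrable μ h₁ h₂)]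
  refine Tendsto.congr' (hF.mono fun i hi => (integral_prod _ (hi.integrable μ h₁ h₂)).symm) ?_
  refine tendsto_integral_filter_of_dominated_convergence _
    (hF.mono fun i hi => hi.measurable.aestronglyMeasurable.integral_prod_right')
    (hF.mono fun i hi => hne.mono fun v hv => (abs_integral_le_integral_abs).trans
      (hi.integral_abs_le_lineMajorant hβ hv))
    (integrable_lineMajorant μ hF₀'.nonneg.1 hF₀'.nonneg.2 h₁ h₂) (hne.mono fun v hv => ?_)
  exact tendsto_integral_filter_of_dominated_convergence _
    (hF.mono fun i hi => (hi.integrable_line hβ hv).aestronglyMeasurable)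
    (hF.mono fun i hi => .of_forall (hi.abs_le v hv))
    ((integrable_sq_add_sq_rpow hβ (norm_pos_iff.2 hv)).const_mul A) (.of_forall (hlim v hv))

end LineBounds

end Integration

section Taylor

variable {E F : Type*} [NormedAddCommGroup E] [NormedSpace ℝ E] [NormedAddCommGroup F]
  [NormedSpace ℝ F]

theorem hasDerivAt_sub_quadratic_along_ray {f : E → F} {x y : E} {t : ℝ}
    (hf : DifferentiableAt ℝ f (x + t • y)) (A : E →L[ℝ] F) (H : E →L[ℝ] E →L[ℝ] F) :
    HasDerivAt (fun t : ℝ => f (x + t • y) - t • A y - (t ^ 2 / 2) • H y y)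
      ((fderiv ℝ f (x + t • y) - A - H (t • y)) y) t := by
  have hray : HasDerivAt (fun t : ℝ => x + t • y) y t := by
    simpa using ((hasDerivAt_id t).smul_const y).const_add x
  have hlin := (hasDerivAt_id t).smul_const (A y)
  have hquad := ((hasDerivAt_pow 2 t).div_const 2).smul_const (H y y)
  refine (((hf.hasFDerivAt.comp_hasDerivAt t hray).sub hlin).sub hquad).congr_deriv ?_
  simp

/-- The error has derivative `(Df(x + ty) − Df(x) − D²f(x)(ty)) y` along the segment `t ↦ x + ty`,
which differentiability of `Df` at `x` makes small. -/
theorem taylor_two_isLittleO {f : E → F} {x : E} (hf : ContDiffAt ℝ 2 f x) :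
    (fun y => f (x + y) - f x - fderiv ℝ f x y - (1 / 2 : ℝ) • fderiv ℝ (fderiv ℝ f) x y y)
      =o[𝓝 0] fun y => ‖y‖ ^ 2 := by
  refine Asymptotics.isLittleO_iff.2 fun c hc => ?_
  have hderiv : HasFDerivAt (fderiv ℝ f) (fderiv ℝ (fderiv ℝ f) x) x :=
    ((hf.fderiv_right (m := 1) (by norm_num)).differentiableAt one_ne_zero).hasFDerivAt
  have hdiff : ∀ᶠ y in 𝓝 x, DifferentiableAt ℝ f y :=
    (hf.eventually (by simp)).mono fun y hy => hy.differentiableAt two_ne_zero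
  obtain ⟨r, hr, hball⟩ := eventually_nhds_iff_ball.1 ((hderiv.isLittleO.def hc).and hdiff)
  filter_upwards [ball_mem_nhds (0 : E) hr] with y hy
  have hray : ∀ t ∈ Set.Icc (0 : ℝ) 1, x + t • y ∈ ball x r ∧ ‖t • y‖ ≤ ‖y‖ := fun t ht => by
    have hle : ‖t • y‖ ≤ ‖y‖ := by
      rw [norm_smul, Real.norm_of_nonneg ht.1]
      exact mul_le_of_le_one_left (norm_nonneg y) ht.2
    exact ⟨by simpa using hle.trans_lt (mem_ball_zero_iff.1 hy), hle⟩
  have hbound := norm_image_sub_le_of_norm_deriv_le_segment_01' (C := c * ‖y‖ ^ 2)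
    (fun t ht => (hasDerivAt_sub_quadratic_along_ray (hball _ (hray t ht).1).2
      (fderiv ℝ f x) (fderiv ℝ (fderiv ℝ f) x)).hasDerivWithinAt) fun t ht => ?_
  · convert hbound using 2
    · simp only [one_smul, zero_smul, add_zero, one_pow, sub_zero, ne_eq, OfNat.ofNat_ne_zero,
        not_false_eq_true, zero_pow, zero_div]
      abel
    · rw [norm_pow, norm_norm]
  · obtain ⟨hxt, hty⟩ := hray t ⟨ht.1, ht.2.le⟩
    have hsmall := (hball _ hxt).1
    rw [add_sub_cancel_left] at hsmall
    calc _ ≤ c * ‖t • y‖ * ‖y‖ := ContinuousLinearMap.le_of_opNorm_le _ hsmall y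
      _ ≤ c * ‖y‖ * ‖y‖ := by gcongr
      _ = c * ‖y‖ ^ 2 := by ring

end Taylor

section Phase

variable {E : Type*} [NormedAddCommGroup E] [InnerProductSpace ℝ E]

/-- `d(x + y) = d(x) + e·y + ½ Q(y, y) + o(|y|²)` as `y → 0`. -/
def HasQuadraticExpansion (d : E → ℝ) (e : E) (Q : E →L[ℝ] E →L[ℝ] ℝ) (x : E) : Prop :=
  (fun y => d (x + y) - d x - ⟪e, y⟫ - 1 / 2 * Q y y) =o[𝓝 0] fun y => ‖y‖ ^ 2

/-- The phase remainder `ε W_ε(z)`, where `W_ε(z) = (d(x + εz) − d(x) − ε e·z) / ε²`. -/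
noncomputable def phaseRem (d : E → ℝ) (x e : E) (ε : ℝ) (z : E) : ℝ :=
  ε * ((d (x + ε • z) - d x - ε * ⟪e, z⟫) / ε ^ 2)

theorem measurable_phaseRem [MeasurableSpace E] [BorelSpace E] [SecondCountableTopology E]
    {d : E → ℝ} (hd : Measurable d) (x e : E) (ε : ℝ) : Measurable (phaseRem d x e ε) := by
  unfold phaseRem
  fun_prop

/-- A bound `|d(x + y) − d(x) − e·y| ≤ L |y|²` on the ball of radius `r`, with `r` so small that
along a line parallel to `e` the bound `L ε |z|²` for the phase remainder has slope at most `1/2`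
while `|εz| < r`. -/
structure LocalQuadraticBound (d : E → ℝ) (x e : E) (r L : ℝ) : Prop where
  radius_pos : 0 < r
  nonneg : 0 ≤ L
  four_mul_le_one : 4 * L * r ≤ 1
  abs_sub_le : ∀ y, ‖y‖ < r → |d (x + y) - d x - ⟪e, y⟫| ≤ L * ‖y‖ ^ 2

theorem LocalQuadraticBound.abs_phaseRem_le {d : E → ℝ} {x e : E} {r L : ℝ}
    (h : LocalQuadraticBound d x e r L) {ε : ℝ} (hε : 0 < ε) {z : E} (hz : ‖ε • z‖ < r) :
    |phaseRem d x e ε z| ≤ L * ε * ‖z‖ ^ 2 := by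
  have h := h.abs_sub_le _ hz
  rw [inner_smul_right, norm_smul, Real.norm_of_nonneg hε.le] at h
  rw [phaseRem, abs_mul, abs_div, abs_of_pos hε, abs_of_pos (by positivity : 0 < ε ^ 2),
    mul_div_assoc', div_le_iff₀ (by positivity)]
  calc _ ≤ ε * (L * (ε * ‖z‖) ^ 2) := by gcongr
    _ = _ := by ring

namespace HasQuadraticExpansion

variable {d : E → ℝ} {x e : E} {Q : E →L[ℝ] E →L[ℝ] ℝ}

theorem of_contDiffAt [CompleteSpace E] (hd : ContDiffAt ℝ 2 d x) :
    HasQuadraticExpansion d (gradient d x) (fderiv ℝ (fderiv ℝ d) x) x := by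
  simpa [HasQuadraticExpansion] using taylor_two_isLittleO hd

theorem exists_localQuadraticBound (h : HasQuadraticExpansion d e Q x) :
    ∃ r L, LocalQuadraticBound d x e r L := by
  obtain ⟨r, hr, hball⟩ := eventually_nhds_iff_ball.1 (h.def one_pos)
  obtain ⟨L, hL⟩ : ∃ L, L = 1 + ‖Q‖ := ⟨_, rfl⟩
  have hL₀ : 0 < L := hL ▸ by positivity
  refine ⟨min r (1 / (4 * L)), L, by positivity, hL₀.le, ?_, fun y hy => ?_⟩
  · calc 4 * L * min r (1 / (4 * L)) ≤ 4 * L * (1 / (4 * L)) := by gcongr; exact min_le_right _ _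
      _ = 1 := by field_simp
  · have hrem := hball y (mem_ball_zero_iff.2 (hy.trans_le (min_le_left _ _)))
    have hQ : |Q y y| ≤ ‖Q‖ * ‖y‖ * ‖y‖ := Q.le_opNorm₂ y y
    simp only [Real.norm_eq_abs, abs_pow, abs_norm, one_mul] at hrem
    rw [abs_le] at *
    constructor <;> nlinarith [hrem.1, hrem.2, hQ.1, hQ.2, sq_nonneg ‖y‖, norm_nonneg Q]

theorem hasDerivAt_phaseRem (h : HasQuadraticExpansion d e Q x) (z : E) :
    HasDerivAt (fun ε => phaseRem d x e ε z) (1 / 2 * Q z z) 0 := by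
  have hray : Tendsto (fun ε : ℝ => ε • z) (𝓝[≠] 0) (𝓝 0) :=
    ((continuous_id.smul continuous_const).tendsto' 0 0 (zero_smul ℝ z)).mono_left inf_le_left
  have hrem : Tendsto (fun ε : ℝ => (d (x + ε • z) - d x - ⟪e, ε • z⟫ -
      1 / 2 * Q (ε • z) (ε • z)) / ε ^ 2) (𝓝[≠] 0) (𝓝 0) := by
    refine ((h.comp_tendsto hray).trans_isBigO ?_).tendsto_div_nhds_zero
    refine .of_bound (‖z‖ ^ 2) (.of_forall fun ε => ?_)
    simp [norm_smul, mul_pow, mul_comm]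
  rw [hasDerivAt_iff_tendsto_slope_zero]
  have hlim := hrem.add_const (1 / 2 * Q z z)
  rw [zero_add] at hlim
  refine hlim.congr' (eventually_nhdsWithin_of_forall fun ε (hε : ε ≠ 0) => ?_)
  simp only [phaseRem, inner_smul_right, map_smul, FunLike.coe_smul, Pi.smul_apply, smul_eq_mul,
    zero_add, zero_mul, sub_zero]
  field_simp
  ring

end HasQuadraticExpansion

end Phase

section Slicing

variable {E V : Type*} [NormedAddCommGroup E] [InnerProductSpace ℝ E]
  [NormedAddCommGroup V] [InnerProductSpace ℝ V]

/-- `e` is a unit vector and `φ` an isometric parametrization of the hyperplane `e^⊥`. -/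
structure NormalSlicing (e : E) (φ : V →ₗᵢ[ℝ] E) : Prop where
  norm_eq_one : ‖e‖ = 1
  range_eq : LinearMap.range φ.toLinearMap = (ℝ ∙ e)ᗮ

/-- The coordinates `(v, s) ↦ s e + φ(v)` on `E ≅ e^⊥ × ℝ`. -/
noncomputable def sliceMap (e : E) (φ : V →ₗᵢ[ℝ] E) (p : V × ℝ) : E := p.2 • e + φ p.1

variable {e : E} {φ : V →ₗᵢ[ℝ] E}

theorem sliceMap_one (e : E) (φ : V →ₗᵢ[ℝ] E) (u : V) : sliceMap e φ (u, 1) = e + φ u := by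
  simp [sliceMap]

theorem sliceMap_smul (s : ℝ) (u : V) : sliceMap e φ (s • u, s) = s • (e + φ u) := by
  simp [sliceMap]

namespace NormalSlicing

variable (h : NormalSlicing e φ)
include h

theorem inner_eq_zero (v : V) : ⟪e, φ v⟫ = 0 :=
  Submodule.mem_orthogonal_singleton_iff_inner_right.1
    (h.range_eq ▸ LinearMap.mem_range_self φ.toLinearMap v)

theorem finrank_eq [FiniteDimensional ℝ E] :
    Module.finrank ℝ E = Module.finrank ℝ V + 1 := by
  have he : e ≠ 0 := norm_ne_zero_iff.1 (h.norm_eq_one ▸ one_ne_zero)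
  rw [← Submodule.finrank_add_finrank_orthogonal (ℝ ∙ e), ← h.range_eq,
    LinearMap.finrank_range_of_inj φ.injective, finrank_span_singleton he, add_comm]

theorem inner_sliceMap (v : V) (s : ℝ) : ⟪e, sliceMap e φ (v, s)⟫ = s := by
  simp [sliceMap, inner_add_right, inner_smul_right, h.inner_eq_zero, h.norm_eq_one]

theorem norm_sq_sliceMap (v : V) (s : ℝ) : ‖sliceMap e φ (v, s)‖ ^ 2 = s ^ 2 + ‖v‖ ^ 2 := by
  rw [sliceMap, norm_add_sq_real]
  simp [inner_smul_left, h.inner_eq_zero, norm_smul, h.norm_eq_one]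

theorem norm_sliceMap_rpow (β : ℝ) (v : V) (s : ℝ) :
    ‖sliceMap e φ (v, s)‖ ^ (-β) = (s ^ 2 + ‖v‖ ^ 2) ^ (-β / 2) := by
  rw [← h.norm_sq_sliceMap, ← Real.rpow_natCast_mul (norm_nonneg _), Nat.cast_ofNat,
    mul_div_cancel₀ _ two_ne_zero]

theorem norm_le_norm_sliceMap (v : V) (s : ℝ) : ‖v‖ ≤ ‖sliceMap e φ (v, s)‖ :=
  le_of_sq_le_sq (by rw [h.norm_sq_sliceMap]; exact le_add_of_nonneg_left (sq_nonneg s))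
    (norm_nonneg _)

theorem abs_le_norm_sliceMap (v : V) (s : ℝ) : |s| ≤ ‖sliceMap e φ (v, s)‖ :=
  le_of_sq_le_sq (by
    rw [h.norm_sq_sliceMap, sq_abs]; exact le_add_of_nonneg_right (sq_nonneg _)) (norm_nonneg _)

theorem sliceMap_ne_zero {v : V} (hv : v ≠ 0) (s : ℝ) : sliceMap e φ (v, s) ≠ 0 :=
  norm_pos_iff.1 ((norm_pos_iff.2 hv).trans_le (h.norm_le_norm_sliceMap v s))

theorem norm_add_rpow (β : ℝ) (u : V) : ‖e + φ u‖ ^ (-β) = (1 + ‖u‖ ^ 2) ^ (-β / 2) := by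
  rw [← sliceMap_one, h.norm_sliceMap_rpow, one_pow]

theorem add_ne_zero (u : V) : e + φ u ≠ 0 := by
  rw [← sliceMap_one]
  exact norm_pos_iff.1 (one_pos.trans_le (by simpa using h.abs_le_norm_sliceMap u 1))

variable [FiniteDimensional ℝ E] [FiniteDimensional ℝ V]

/-- `sliceMap` is a surjective isometry for the `ℓ²` norm on `V × ℝ`. -/
theorem exists_linearIsometryEquiv :
    ∃ I : WithLp 2 (V × ℝ) ≃ₗᵢ[ℝ] E, sliceMap e φ = I ∘ WithLp.toLp 2 := by
  let T : WithLp 2 (V × ℝ) →ₗ[ℝ] E :=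
    { toFun := fun p => sliceMap e φ (WithLp.ofLp p)
      map_add' := fun p q => by
        simp only [sliceMap, WithLp.ofLp_add, Prod.fst_add, Prod.snd_add, add_smul, map_add]
        exact add_add_add_comm _ _ _ _
      map_smul' := fun c p => by simp [sliceMap, mul_smul] }
  have hT : ∀ p, ‖T p‖ = ‖p‖ := fun p => by
    refine (sq_eq_sq₀ (norm_nonneg _) (norm_nonneg _)).1 ?_
    rw [WithLp.prod_norm_sq_eq_of_L2, Real.norm_eq_abs, sq_abs, add_comm]
    exact h.norm_sq_sliceMap p.fst p.snd
  have hrank : Module.finrank ℝ (WithLp 2 (V × ℝ)) = Module.finrank ℝ E := by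
    rw [(WithLp.linearEquiv 2 ℝ (V × ℝ)).finrank_eq, Module.finrank_prod, h.finrank_eq,
      Module.finrank_self]
  exact ⟨LinearIsometry.toLinearIsometryEquiv ⟨T, hT⟩ hrank, rfl⟩

variable [MeasurableSpace E] [BorelSpace E] [MeasurableSpace V] [BorelSpace V]

theorem measurePreserving_sliceMap :
    MeasurePreserving (sliceMap e φ) (volume.prod volume) volume := by
  obtain ⟨I, hI⟩ := h.exists_linearIsometryEquiv
  rw [hI]
  exact I.measurePreserving.comp (WithLp.volume_preserving_toLp V ℝ)

theorem measurableEmbedding_sliceMap : MeasurableEmbedding (sliceMap e φ) := by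
  obtain ⟨I, hI⟩ := h.exists_linearIsometryEquiv
  rw [hI]
  exact I.toHomeomorph.measurableEmbedding.comp
    (MeasurableEquiv.toLp 2 (V × ℝ)).measurableEmbedding

end NormalSlicing

end Slicing

section Kernel

variable {E : Type*} [NormedAddCommGroup E] [NormedSpace ℝ E] {g J : E → ℝ} {γ : ℝ}

/-- A kernel on `E ∖ {0}` that is continuous, even and homogeneous of degree `-γ`. -/
structure HomogeneousKernel (γ : ℝ) (J : E → ℝ) : Prop where
  continuousOn : ContinuousOn J {0}ᶜ
  smul_eq : ∀ s : ℝ, s ≠ 0 → ∀ z, z ≠ 0 → J (s • z) = |s| ^ (-γ) * J z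

theorem inv_norm_smul_mem_sphere {z : E} (hz : z ≠ 0) : ‖z‖⁻¹ • z ∈ sphere (0 : E) 1 := by
  simp [norm_smul, norm_ne_zero_iff.2 hz]

namespace HomogeneousKernel

theorem of_sphere (hg : ContinuousOn g (sphere (0 : E) 1))
    (hg_even : ∀ θ ∈ sphere (0 : E) 1, g (-θ) = g θ)
    (hJ : ∀ z : E, z ≠ 0 → J z = g (‖z‖⁻¹ • z) * ‖z‖ ^ (-γ)) : HomogeneousKernel γ J where
  continuousOn := by
    have hnorm : ∀ z ∈ ({0}ᶜ : Set E), ‖z‖ ≠ 0 := fun z hz => norm_ne_zero_iff.2 hz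
    refine ContinuousOn.congr (.mul (hg.comp ?_ fun z hz => inv_norm_smul_mem_sphere hz) ?_) hJ
    · exact (continuous_norm.continuousOn.inv₀ hnorm).smul continuousOn_id
    · exact continuous_norm.continuousOn.rpow_const fun z hz => .inl (hnorm z hz)
  smul_eq s hs z hz := by
    have hdir : g (‖s • z‖⁻¹ • s • z) = g (‖z‖⁻¹ • z) := by
      rw [norm_smul, smul_smul, mul_inv, mul_right_comm, Real.norm_eq_abs, mul_smul]
      rcases hs.lt_or_gt with hs | hs
      · rw [abs_of_neg hs, inv_neg, neg_mul, inv_mul_cancel₀ hs.ne, neg_one_smul,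
          hg_even _ (inv_norm_smul_mem_sphere hz)]
      · rw [abs_of_pos hs, inv_mul_cancel₀ hs.ne', one_smul]
    rw [hJ _ (smul_ne_zero hs hz), hJ _ hz, hdir, norm_smul, Real.norm_eq_abs,
      Real.mul_rpow (abs_nonneg _) (norm_nonneg _)]
    ring

theorem measurable [MeasurableSpace E] [BorelSpace E] (h : HomogeneousKernel γ J) :
    Measurable J :=
  measurable_of_continuousOn_compl_singleton 0 h.continuousOn

theorem exists_abs_le [FiniteDimensional ℝ E] (h : HomogeneousKernel γ J) :
    ∃ C ≥ 0, ∀ z, z ≠ 0 → |J z| ≤ C * ‖z‖ ^ (-γ) := by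
  obtain ⟨C, hC⟩ := (isCompact_sphere (0 : E) 1).exists_bound_of_continuousOn
    (h.continuousOn.mono fun z hz => ne_zero_of_mem_unit_sphere ⟨z, hz⟩)
  refine ⟨max C 0, le_max_right _ _, fun z hz => ?_⟩
  have hz' : ‖z‖ ≠ 0 := norm_ne_zero_iff.2 hz
  have hdir := inv_norm_smul_mem_sphere hz
  have hpolar := h.smul_eq ‖z‖ hz' _ (ne_zero_of_mem_unit_sphere ⟨_, hdir⟩)
  rw [smul_inv_smul₀ hz', abs_norm] at hpolar
  rw [hpolar, abs_mul, abs_of_nonneg (by positivity), mul_comm]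
  gcongr
  exact (hC _ hdir).trans (le_max_left _ _)

end HomogeneousKernel

end Kernel

section ScaledIncrement

variable {E V : Type*} [NormedAddCommGroup E] [InnerProductSpace ℝ E]
  [NormedAddCommGroup V] [InnerProductSpace ℝ V]

/-- The integrand of `ā_ε` in the variable `z`; for `G = crossCorr (deriv q) q` it results from
the integration in `ξ`. -/
noncomputable def scaledIncrement (G : ℝ → ℝ) (J d : E → ℝ) (x e : E) (ε : ℝ) (z : E) : ℝ :=
  1 / ε * (G (⟪e, z⟫ + phaseRem d x e ε z) - G ⟪e, z⟫) * J z

variable {G : ℝ → ℝ} {B K C β r L ε : ℝ} {J d : E → ℝ} {x e z : E} {φ : V →ₗᵢ[ℝ] E}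

theorem measurable_scaledIncrement [MeasurableSpace E] [BorelSpace E]
    [SecondCountableTopology E] (hG : Continuous G) (hJ : Measurable J) (hd : Measurable d)
    (x e : E) (ε : ℝ) : Measurable (scaledIncrement G J d x e ε) := by
  have := measurable_phaseRem hd x e ε
  unfold scaledIncrement
  fun_prop

theorem mul_rpow_neg_add_one {t : ℝ} (ht : 0 < t) (c : ℝ) : t * t ^ (-(c + 1)) = t ^ (-c) := by
  rw [neg_add', Real.rpow_sub_one ht.ne', mul_div_cancel₀ _ ht.ne']

theorem sq_mul_rpow_neg_add_two {t : ℝ} (ht : 0 < t) (c : ℝ) :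
    t ^ 2 * t ^ (-(c + 2)) = t ^ (-c) := by
  rw [neg_add', Real.rpow_sub ht, Real.rpow_two, mul_div_cancel₀ _ (by positivity)]

section Pointwise

variable (hG : BoundedWave B K G) (hJ : ∀ z, z ≠ 0 → |J z| ≤ C * ‖z‖ ^ (-(β + 2)))
include hG hJ

theorem abs_scaledIncrement_le_near (hd : LocalQuadraticBound d x e r L) (hε : 0 < ε)
    (hz : z ≠ 0) (hzr : ‖ε • z‖ < r) : |scaledIncrement G J d x e ε z| ≤
      C * L * ‖z‖ ^ (-β) *
        ∫ t in (-1 : ℝ)..1, deriv G (⟪e, z⟫ + t * (L * ε * ‖z‖ ^ 2)) := by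
  have hincr := hG.abs_increment_le (hd.abs_phaseRem_le hε hzr) ⟪e, z⟫
  rw [scaledIncrement, abs_mul, abs_mul, abs_of_pos (one_div_pos.2 hε),
    ← sq_mul_rpow_neg_add_two (norm_pos_iff.2 hz)]
  calc _ ≤ 1 / ε * (L * ε * ‖z‖ ^ 2 * _) * (C * ‖z‖ ^ (-(β + 2))) :=
        mul_le_mul (by gcongr) (hJ z hz) (abs_nonneg _)
          (mul_nonneg (by positivity) ((abs_nonneg _).trans hincr))
    _ = _ := by field_simp

theorem abs_scaledIncrement_le_far (hε : 0 < ε) (hr : 0 < r) (hz : z ≠ 0)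
    (hzr : r ≤ ‖ε • z‖) :
    |scaledIncrement G J d x e ε z| ≤ 2 * B * C / r * ‖z‖ ^ (-(β + 1)) := by
  have hB := hG.bound_nonneg
  have hinv : 1 / ε ≤ ‖z‖ / r := by
    rw [norm_smul, Real.norm_of_nonneg hε.le] at hzr
    rw [div_le_div_iff₀ hε hr]
    linarith
  rw [scaledIncrement, abs_mul, abs_mul, abs_of_pos (one_div_pos.2 hε),
    ← mul_rpow_neg_add_one (norm_pos_iff.2 hz), add_assoc, one_add_one_eq_two]
  calc _ ≤ ‖z‖ / r * (2 * B) * (C * ‖z‖ ^ (-(β + 2))) := by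
        gcongr
        exacts [hG.abs_sub_le _ _, hJ z hz]
    _ = _ := by ring

theorem abs_scaledIncrement_le {δ : ℝ} (hd : LocalQuadraticBound d x e r L) (hC : 0 ≤ C)
    (hε : 0 < ε) (hεδ : ε ≤ δ) (hz : z ≠ 0) : |scaledIncrement G J d x e ε z| ≤
      (2 * K * C * L + 2 * B * C * δ / r ^ 2) * ‖z‖ ^ (-β) := by
  have hr := hd.radius_pos
  have hL := hd.nonneg
  have hB := hG.bound_nonneg
  have hK := hG.slope_bound_nonneg
  have hδ := hε.le.trans hεδ
  rw [add_mul]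
  rcases lt_or_ge ‖ε • z‖ r with hzr | hzr
  · refine le_add_of_le_of_nonneg ?_ (by positivity)
    calc _ ≤ C * L * ‖z‖ ^ (-β) * (2 * K) :=
          (abs_scaledIncrement_le_near hG hJ hd hε hz hzr).trans
            (by gcongr; exact hG.integral_deriv_segment_le _ _)
      _ = _ := by ring
  · refine le_add_of_nonneg_of_le (by positivity) ?_
    have hone : 1 ≤ δ / r * ‖z‖ := by
      rw [norm_smul, Real.norm_of_nonneg hε.le] at hzr
      rw [div_mul_eq_mul_div, one_le_div hr]
      exact hzr.trans (by gcongr)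
    rw [← mul_rpow_neg_add_one (norm_pos_iff.2 hz)]
    calc _ ≤ 2 * B * C / r * ‖z‖ ^ (-(β + 1)) := abs_scaledIncrement_le_far hG hJ hε hr hz hzr
      _ ≤ 2 * B * C / r * ‖z‖ ^ (-(β + 1)) * (δ / r * ‖z‖) :=
          le_mul_of_one_le_right (by positivity) hone
      _ = _ := by field_simp

end Pointwise

theorem continuous_integral_deriv_segment (hG : BoundedWave B K G) (c a : ℝ) :
    Continuous fun s => ∫ t in (-1 : ℝ)..1, deriv G (s + t * (c * (s ^ 2 + a))) := by
  have := hG.continuous_deriv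
  exact intervalIntegral.continuous_parametric_intervalIntegral_of_continuous' (by fun_prop) _ _

/-- Where `|s| ≤ r / ε`, the slope of `s ↦ L ε (s² + a)` is at most `2 L r ≤ 1/2`. -/
theorem integral_near_le (hG : BoundedWave B K G) (hd : LocalQuadraticBound d x e r L)
    (hε : 0 < ε) (a : ℝ) :
    ∫ s in Set.Ioc (-(r / ε)) (r / ε),
      ∫ t in (-1 : ℝ)..1, deriv G (s + t * (L * ε * (s ^ 2 + a))) ≤ 8 * B := by
  have hr := hd.radius_pos
  have hR : -(r / ε) ≤ r / ε := neg_le_self (by positivity)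
  rw [← intervalIntegral.integral_of_le hR]
  refine hG.integral_segment_shear_le (η' := fun s => L * ε * (2 * s)) hR (fun s => ?_)
    (by fun_prop) fun s hs => ?_
  · simpa using ((hasDerivAt_pow 2 s).add_const a).const_mul (L * ε)
  · have hL := hd.nonneg
    have hs : |s| ≤ r / ε := abs_le.2 hs
    calc |L * ε * (2 * s)| = 2 * L * ε * |s| := by
          rw [abs_mul, abs_of_nonneg (by positivity), abs_mul, abs_two]; ring
      _ ≤ 2 * L * ε * (r / ε) := by gcongr
      _ ≤ 1 / 2 := by field_simp; linarith [hd.four_mul_le_one]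

section Line

variable {v : V} (hφ : NormalSlicing e φ) (hG : BoundedWave B K G)
  (hJ : ∀ z, z ≠ 0 → |J z| ≤ C * ‖z‖ ^ (-(β + 2)))
include hφ hG hJ

theorem abs_scaledIncrement_sliceMap_le (hd : LocalQuadraticBound d x e r L) (hC : 0 ≤ C)
    (hε : 0 < ε) (hβ : 0 ≤ β) (hv : v ≠ 0) (s : ℝ) :
    |scaledIncrement G J d x e ε (sliceMap e φ (v, s))| ≤
      (Set.Ioc (-(r / ε)) (r / ε)).indicator (fun s => C * L * ‖v‖ ^ (-β) *
        ∫ t in (-1 : ℝ)..1, deriv G (s + t * (L * ε * (s ^ 2 + ‖v‖ ^ 2)))) s +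
      2 * B * C / r * (s ^ 2 + ‖v‖ ^ 2) ^ (-(β + 1) / 2) := by
  have hr := hd.radius_pos
  have hL := hd.nonneg
  have hB := hG.bound_nonneg
  have hz := hφ.sliceMap_ne_zero hv s
  have hseg : 0 ≤ ∫ t in (-1 : ℝ)..1, deriv G (s + t * (L * ε * (s ^ 2 + ‖v‖ ^ 2))) :=
    intervalIntegral.integral_nonneg (by norm_num) fun _ _ => hG.deriv_nonneg _
  rcases lt_or_ge ‖ε • sliceMap e φ (v, s)‖ r with hzr | hzr
  · have hs : |s| < r / ε := by
      rw [norm_smul, Real.norm_of_nonneg hε.le] at hzr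
      exact (hφ.abs_le_norm_sliceMap v s).trans_lt ((lt_div_iff₀' hε).2 hzr)
    rw [Set.indicator_of_mem (Set.Ioo_subset_Ioc_self (abs_lt.1 hs))]
    refine le_add_of_le_of_nonneg ?_ (by positivity)
    refine (abs_scaledIncrement_le_near hG hJ hd hε hz hzr).trans ?_
    rw [hφ.inner_sliceMap, hφ.norm_sq_sliceMap]
    gcongr C * L * ?_ * _
    exact Real.rpow_le_rpow_of_nonpos (norm_pos_iff.2 hv) (hφ.norm_le_norm_sliceMap v s)
      (neg_nonpos.2 hβ)
  · refine le_add_of_nonneg_of_le (Set.indicator_nonneg (fun s _ => ?_) s) ?_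
    · exact mul_nonneg (by positivity)
        (intervalIntegral.integral_nonneg (by norm_num) fun _ _ => hG.deriv_nonneg _)
    · rw [← hφ.norm_sliceMap_rpow]
      exact abs_scaledIncrement_le_far hG hJ hε hr hz hzr

theorem integral_abs_scaledIncrement_sliceMap_le (hd : LocalQuadraticBound d x e r L)
    (hC : 0 ≤ C) (hε : 0 < ε) (hβ : 0 < β) (hv : v ≠ 0) :
    ∫ s, |scaledIncrement G J d x e ε (sliceMap e φ (v, s))| ≤
      (8 * B * C * L + 2 * B * C / r * lineConst (β + 1)) * ‖v‖ ^ (-β) := by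
  have hL := hd.nonneg
  have hv' := norm_pos_iff.2 hv
  have hnear := (((continuous_integral_deriv_segment hG (L * ε) (‖v‖ ^ 2)).const_mul
    (C * L * ‖v‖ ^ (-β))).integrableOn_Ioc (a := -(r / ε)) (b := r / ε) (μ := volume)
    ).integrable_indicator measurableSet_Ioc
  have hfar := (integrable_sq_add_sq_rpow (lt_add_of_pos_left 1 hβ) hv').const_mul
    (2 * B * C / r)
  refine (integral_mono_of_nonneg (.of_forall fun _ => abs_nonneg _) (hnear.add hfar)
    (.of_forall (abs_scaledIncrement_sliceMap_le hφ hG hJ hd hC hε hβ.le hv))).trans ?_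
  rw [integral_add' hnear hfar, integral_indicator measurableSet_Ioc, integral_const_mul,
    integral_const_mul, integral_sq_add_sq_rpow _ hv', sub_add_cancel_right]
  have hmass := mul_le_mul_of_nonneg_left (integral_near_le hG hd hε (‖v‖ ^ 2))
    (by positivity : 0 ≤ C * L * ‖v‖ ^ (-β))
  linarith

theorem lineBounds_scaledIncrement [FiniteDimensional ℝ E] [MeasurableSpace E] [BorelSpace E]
    [FiniteDimensional ℝ V] [MeasurableSpace V] [BorelSpace V] {δ : ℝ}
    (hd : LocalQuadraticBound d x e r L) (hC : 0 ≤ C) (hβ : 0 < β) (hJ_meas : Measurable J)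
    (hd_meas : Measurable d) (hε : 0 < ε) (hεδ : ε ≤ δ) :
    LineBounds (2 * K * C * L + 2 * B * C * δ / r ^ 2)
      (8 * B * C * L + 2 * B * C / r * lineConst (β + 1)) β
      fun p : V × ℝ => scaledIncrement G J d x e ε (sliceMap e φ p) where
  measurable := (measurable_scaledIncrement hG.contDiff.continuous hJ_meas hd_meas x e ε).comp
    hφ.measurePreserving_sliceMap.measurable
  abs_le v hv s := hφ.norm_sliceMap_rpow β v s ▸
    abs_scaledIncrement_le hG hJ hd hC hε hεδ (hφ.sliceMap_ne_zero hv s)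
  integral_abs_le _ hv := integral_abs_scaledIncrement_sliceMap_le hφ hG hJ hd hC hε hβ hv

end Line

end ScaledIncrement

section Limit

variable {E V : Type*} [NormedAddCommGroup E] [InnerProductSpace ℝ E]
  [NormedAddCommGroup V] [InnerProductSpace ℝ V]

/-- The pointwise limit of `scaledIncrement G J d x e ε` as `ε → 0`, where `Φ` is the derivative of
`G` and `Q` the Hessian of `d` at `x`. -/
noncomputable def limitIncrement (Φ : ℝ → ℝ) (J : E → ℝ) (Q : E →L[ℝ] E →L[ℝ] ℝ)
    (e z : E) : ℝ :=
  1 / 2 * Q z z * Φ ⟪e, z⟫ * J z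

variable {G : ℝ → ℝ} {B K β : ℝ} {J d : E → ℝ} {Q : E →L[ℝ] E →L[ℝ] ℝ} {x e : E}
  {φ : V →ₗᵢ[ℝ] E}

theorem tendsto_scaledIncrement (hG : BoundedWave B K G) (hQ : HasQuadraticExpansion d e Q x)
    (J : E → ℝ) (z : E) : Tendsto (fun ε => scaledIncrement G J d x e ε z) (𝓝[>] 0)
      (𝓝 (limitIncrement (deriv G) J Q e z)) := by
  have hzero : phaseRem d x e 0 z = 0 := zero_mul _
  have hderiv : HasDerivAt (fun ε => G (⟪e, z⟫ + phaseRem d x e ε z))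
      (deriv G ⟪e, z⟫ * (1 / 2 * Q z z)) 0 :=
    HasDerivAt.comp (h₂ := G) 0 (by rw [hzero, add_zero]; exact hG.hasDerivAt _)
      ((hQ.hasDerivAt_phaseRem z).const_add _)
  have hslope := (hasDerivAt_iff_tendsto_slope_zero.1 hderiv).mono_left
    (nhdsWithin_mono 0 fun ε (hε : 0 < ε) => hε.ne')
  simp only [zero_add, hzero, add_zero, smul_eq_mul, ← one_div] at hslope
  rw [limitIncrement, mul_comm (1 / 2 * Q z z)]
  exact hslope.mul_const (J z)

theorem limitIncrement_sliceMap_smul {γ s : ℝ} (hφ : NormalSlicing e φ)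
    (hJ : HomogeneousKernel γ J) (Φ : ℝ → ℝ) (hs : s ≠ 0) (u : V) :
    limitIncrement Φ J Q e (sliceMap e φ (s • u, s)) =
      1 / 2 * (Φ s * (s ^ 2 * |s| ^ (-γ))) * (Q (e + φ u) (e + φ u) * J (e + φ u)) := by
  rw [limitIncrement, hφ.inner_sliceMap, sliceMap_smul, hJ.smul_eq s hs _ (hφ.add_ne_zero u)]
  simp only [map_smul, smul_eq_mul, FunLike.coe_smul, Pi.smul_apply]
  ring

variable [FiniteDimensional ℝ V] [MeasurableSpace V] [BorelSpace V]

/-- The slice `e·z = s` is the slice `e·z = 1` scaled by `s`. -/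
theorem integral_limitIncrement_slice {γ s : ℝ} (hφ : NormalSlicing e φ)
    (hJ : HomogeneousKernel γ J) (Φ : ℝ → ℝ) (hs : s ≠ 0) :
    ∫ v, limitIncrement Φ J Q e (sliceMap e φ (v, s)) =
      1 / 2 * (Φ s * |s| ^ (Module.finrank ℝ V + 2 - γ)) *
        ∫ u, Q (e + φ u) (e + φ u) * J (e + φ u) := by
  have hscale := Measure.integral_comp_smul volume
    (fun v => limitIncrement Φ J Q e (sliceMap e φ (v, s))) s
  simp only [limitIncrement_sliceMap_smul hφ hJ Φ hs] at hscale
  rw [integral_const_mul, abs_inv, abs_pow, smul_eq_mul,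
    eq_inv_mul_iff_mul_eq₀ (pow_ne_zero _ (abs_ne_zero.2 hs))] at hscale
  rw [← hscale, sub_eq_add_neg, Real.rpow_add (abs_pos.2 hs), Real.rpow_add (abs_pos.2 hs),
    Real.rpow_natCast, Real.rpow_two, sq_abs]
  ring

variable [FiniteDimensional ℝ E] [MeasurableSpace E] [BorelSpace E]

theorem measurable_limitIncrement {Φ : ℝ → ℝ} (hΦ : Continuous Φ) (hJ : Measurable J)
    (Q : E →L[ℝ] E →L[ℝ] ℝ) (e : E) : Measurable (limitIncrement Φ J Q e) := by
  unfold limitIncrement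
  fun_prop

theorem exists_lineBounds_scaledIncrement (hφ : NormalSlicing e φ) (hG : BoundedWave B K G)
    (hJ : HomogeneousKernel (β + 2) J) (hβ : 0 < β) (hd : Measurable d)
    (hQ : HasQuadraticExpansion d e Q x) (δ : ℝ) :
    ∃ A M, ∀ ε, 0 < ε → ε ≤ δ →
      LineBounds A M β fun p : V × ℝ => scaledIncrement G J d x e ε (sliceMap e φ p) := by
  obtain ⟨C, hC, hJC⟩ := hJ.exists_abs_le
  obtain ⟨r, L, hrL⟩ := hQ.exists_localQuadraticBound
  exact ⟨_, _, fun ε hε hεδ =>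
    lineBounds_scaledIncrement hφ hG hJC hrL hC hβ hJ.measurable hd hε hεδ⟩

section Convergence

variable [Nontrivial V] (hφ : NormalSlicing e φ) (hG : BoundedWave B K G)
  (hJ : HomogeneousKernel (β + 2) J) (hd : Measurable d) (hQ : HasQuadraticExpansion d e Q x)
  (h₁ : (Module.finrank ℝ V : ℝ) < β) (h₂ : β < Module.finrank ℝ V + 1)
include hφ hG hJ hd hQ h₁ h₂

theorem integrable_scaledIncrement {ε : ℝ} (hε : 0 < ε) :
    Integrable (scaledIncrement G J d x e ε) := by
  have hβ := one_pos.trans (one_lt_of_finrank_lt h₁)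
  obtain ⟨A, M, hF⟩ := exists_lineBounds_scaledIncrement hφ hG hJ hβ hd hQ ε
  exact (hφ.measurePreserving_sliceMap.integrable_comp_emb hφ.measurableEmbedding_sliceMap).1
    ((hF ε hε le_rfl).integrable volume h₁ h₂)

theorem tendsto_integral_scaledIncrement :
    Integrable (limitIncrement (deriv G) J Q e) ∧
    Tendsto (fun ε => ∫ z, scaledIncrement G J d x e ε z) (𝓝[>] 0)
      (𝓝 (∫ z, limitIncrement (deriv G) J Q e z)) := by
  have hβ := one_lt_of_finrank_lt h₁
  have hmp := hφ.measurePreserving_sliceMap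
  have hemb := hφ.measurableEmbedding_sliceMap
  obtain ⟨A, M, hF⟩ := exists_lineBounds_scaledIncrement hφ hG hJ (one_pos.trans hβ) hd hQ 1
  have hF' : ∀ᶠ ε in 𝓝[>] 0, LineBounds A M β fun p : V × ℝ =>
      scaledIncrement G J d x e ε (sliceMap e φ p) :=
    mem_of_superset (Ioc_mem_nhdsGT one_pos) fun ε hε => hF ε hε.1 hε.2
  have hmeas : Measurable fun p => limitIncrement (deriv G) J Q e (sliceMap e φ p) :=
    (measurable_limitIncrement hG.continuous_deriv hJ.measurable Q e).comp hmp.measurable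
  have hlim := fun (v : V) (s : ℝ) => tendsto_scaledIncrement hG hQ J (sliceMap e φ (v, s))
  refine ⟨(hmp.integrable_comp_emb hemb).1
    ((LineBounds.of_tendsto hF' hβ hmeas fun v _ => hlim v).integrable volume h₁ h₂), ?_⟩
  simp only [← hmp.integral_comp hemb]
  exact LineBounds.tendsto_integral volume hF' hmeas h₁ h₂ fun v _ => hlim v

end Convergence

theorem integral_limitIncrement {γ : ℝ} (hφ : NormalSlicing e φ) (hJ : HomogeneousKernel γ J)
    {Φ : ℝ → ℝ} (hint : Integrable (limitIncrement Φ J Q e)) :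
    ∫ z, limitIncrement Φ J Q e z =
      1 / 2 * (∫ s, Φ s * |s| ^ (Module.finrank ℝ V + 2 - γ)) *
        ∫ u, Q (e + φ u) (e + φ u) * J (e + φ u) := by
  have hmp := hφ.measurePreserving_sliceMap
  have hemb := hφ.measurableEmbedding_sliceMap
  have hint' : Integrable (fun p => limitIncrement Φ J Q e (sliceMap e φ p))
      (volume.prod volume) := (hmp.integrable_comp_emb hemb).2 hint
  rw [← hmp.integral_comp hemb, integral_prod_symm _ hint', integral_congr_ae
    ((Measure.ae_ne volume 0).mono fun s hs => integral_limitIncrement_slice hφ hJ Φ hs),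
    integral_mul_const, integral_const_mul]

end Limit

section Trace

theorem trace_of_integral_mul {E V ι : Type*} [NormedAddCommGroup E] [InnerProductSpace ℝ E]
    [Fintype ι] [MeasurableSpace V] {μ : Measure V} (b : OrthonormalBasis ι ℝ E) {y : V → E}
    {w : V → ℝ} (Q : E →L[ℝ] E →L[ℝ] ℝ)
    (hint : ∀ i j, Integrable (fun u => b.repr (y u) i * b.repr (y u) j * w u) μ) :
    Matrix.trace ((Matrix.of fun i j => ∫ u, b.repr (y u) i * b.repr (y u) j * w u ∂μ) *
      Matrix.of fun i j => Q (b i) (b j)) = ∫ u, Q (y u) (y u) * w u ∂μ := by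
  have hexpand : ∀ u, Q (y u) (y u) * w u =
      ∑ i, ∑ j, b.repr (y u) i * b.repr (y u) j * w u * Q (b j) (b i) := fun u => by
    conv_lhs => rw [← b.sum_repr (y u)]
    simp only [map_sum, map_smul, sum_apply, FunLike.coe_smul, Pi.smul_apply, smul_eq_mul,
      Finset.sum_mul, Finset.mul_sum]
    exact Finset.sum_congr rfl fun i _ => Finset.sum_congr rfl fun j _ => by ring
  simp only [hexpand, Matrix.trace, Matrix.diag_apply, Matrix.mul_apply, Matrix.of_apply]
  rw [integral_finsetSum _ fun i _ => integrable_finsetSum _ fun j _ => (hint i j).mul_const _]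
  refine Finset.sum_congr rfl fun i _ => ?_
  rw [integral_finsetSum _ fun j _ => (hint i j).mul_const _]
  simp only [integral_mul_const]

variable {E V ι : Type*} [NormedAddCommGroup E] [InnerProductSpace ℝ E] [NormedAddCommGroup V]
  [InnerProductSpace ℝ V] [FiniteDimensional ℝ V] [MeasurableSpace V] [BorelSpace V] [Fintype ι]

/-- The matrix `M_g(e)` in the basis `b`; on `e + e^⊥` the kernel `J` equals
`g((e + u)/|e + u|) (1 + |u|²)^{-(N+α)/2}`. -/
noncomputable def anisotropyMatrix (b : OrthonormalBasis ι ℝ E) (J : E → ℝ) (e : E)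
    (φ : V →ₗᵢ[ℝ] E) : Matrix ι ι ℝ :=
  Matrix.of fun i j => ∫ u, b.repr (e + φ u) i * b.repr (e + φ u) j * J (e + φ u)

variable [FiniteDimensional ℝ E] {e : E} {φ : V →ₗᵢ[ℝ] E} {J : E → ℝ} {β : ℝ}

theorem integrable_anisotropyMatrix_entry (b : OrthonormalBasis ι ℝ E) (hφ : NormalSlicing e φ)
    (hJ : HomogeneousKernel (β + 2) J) (hβ : (Module.finrank ℝ V : ℝ) < β) (i j : ι) :
    Integrable fun u => b.repr (e + φ u) i * b.repr (e + φ u) j * J (e + φ u) := by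
  obtain ⟨C, -, hC⟩ := hJ.exists_abs_le
  have hφc : Continuous fun u => e + φ u := continuous_const.add φ.continuous
  have hJc : Continuous fun u => J (e + φ u) :=
    hJ.continuousOn.comp_continuous hφc hφ.add_ne_zero
  have hcoord : ∀ k, Continuous fun u => b.repr (e + φ u) k := fun k =>
    (PiLp.continuous_apply 2 _ k).comp (b.repr.continuous.comp hφc)
  have hcoord_le : ∀ k u, ‖b.repr (e + φ u) k‖ ≤ ‖e + φ u‖ := fun k u =>
    (PiLp.norm_apply_le _ k).trans_eq (b.repr.norm_map _)
  refine ((integrable_rpow_neg_one_add_norm_sq hβ).const_mul C).mono'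
    (((hcoord i).mul (hcoord j)).mul hJc).aestronglyMeasurable (.of_forall fun u => ?_)
  rw [norm_mul, norm_mul, ← hφ.norm_add_rpow,
    ← sq_mul_rpow_neg_add_two (norm_pos_iff.2 (hφ.add_ne_zero u))]
  calc _ ≤ ‖e + φ u‖ * ‖e + φ u‖ * (C * ‖e + φ u‖ ^ (-(β + 2))) := by
        gcongr
        exacts [hcoord_le i u, hcoord_le j u, hC _ (hφ.add_ne_zero u)]
    _ = _ := by ring

theorem trace_anisotropyMatrix_mul (b : OrthonormalBasis ι ℝ E) (hφ : NormalSlicing e φ)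
    (hJ : HomogeneousKernel (β + 2) J) (hβ : (Module.finrank ℝ V : ℝ) < β)
    (Q : E →L[ℝ] E →L[ℝ] ℝ) :
    Matrix.trace (anisotropyMatrix b J e φ * Matrix.of fun i j => Q (b i) (b j)) =
      ∫ u, Q (e + φ u) (e + φ u) * J (e + φ u) :=
  trace_of_integral_mul b Q (integrable_anisotropyMatrix_entry b hφ hJ hβ)

end Trace

section Fubini

variable {E : Type*} [NormedAddCommGroup E] [InnerProductSpace ℝ E]

/-- The integrand of `ε ā_ε` in the variables `p = (z, ξ)`. -/
noncomputable def oscIntegrand (q : ℝ → ℝ) (J d : E → ℝ) (x e : E) (ε : ℝ) (p : E × ℝ) : ℝ :=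
  deriv q p.2 * (q (p.2 + ⟪e, p.1⟫ + phaseRem d x e ε p.1) - q (p.2 + ⟪e, p.1⟫)) * J p.1

variable [FiniteDimensional ℝ E] [MeasurableSpace E] [BorelSpace E] {B K ε : ℝ} {q : ℝ → ℝ}
  {J d : E → ℝ} {x e : E}

theorem integrable_oscIntegrand (hq : BoundedWave B K q) (hJ : Measurable J) (hd : Measurable d)
    (hε : 0 < ε) (hint : Integrable (scaledIncrement (crossCorr (deriv q) q) J d x e ε)) :
    Integrable (oscIntegrand q J d x e ε) := by
  have hqc := hq.contDiff.continuous
  have := hq.continuous_deriv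
  have hrem := measurable_phaseRem hd x e ε
  have hmeas : Measurable (oscIntegrand q J d x e ε) := by
    unfold oscIntegrand
    fun_prop
  refine (integrable_prod_iff hmeas.aestronglyMeasurable).2 ⟨.of_forall fun z => ?_, ?_⟩
  · have hshift := integrable_mul_comp_add hq.integrable_deriv hqc hq.abs_le_bound
    simpa only [oscIntegrand, mul_sub, add_assoc, Pi.sub_apply] using
      ((hshift (⟪e, z⟫ + phaseRem d x e ε z)).sub (hshift ⟪e, z⟫)).mul_const (J z)
  · refine (hint.norm.const_mul ε).congr (.of_forall fun z => ?_)
    simp only [oscIntegrand, scaledIncrement, norm_mul _ (J z), Real.norm_eq_abs (_ * (_ - _))]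
    rw [integral_mul_const, integral_abs_mul_increment hq.integrable_deriv
      (fun ξ => hq.deriv_nonneg ξ) hqc hq.monotone hq.abs_le_bound, abs_mul,
      abs_of_pos (one_div_pos.2 hε)]
    field_simp

theorem integral_oscIntegrand (hq : BoundedWave B K q)
    (hint : Integrable (oscIntegrand q J d x e ε)) :
    1 / ε * ∫ p, oscIntegrand q J d x e ε p =
      ∫ z, scaledIncrement (crossCorr (deriv q) q) J d x e ε z := by
  rw [Measure.volume_eq_prod, integral_prod _ hint, ← integral_const_mul]
  refine integral_congr_ae (.of_forall fun z => ?_)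
  simp only [oscIntegrand, scaledIncrement]
  rw [integral_mul_const, integral_mul_increment hq.integrable_deriv hq.contDiff.continuous
    hq.abs_le_bound, mul_assoc]

end Fubini

theorem stmt_15_general {E V ι : Type*} [NormedAddCommGroup E] [InnerProductSpace ℝ E]
    [FiniteDimensional ℝ E] [MeasurableSpace E] [BorelSpace E]
    [NormedAddCommGroup V] [InnerProductSpace ℝ V] [FiniteDimensional ℝ V] [Nontrivial V]
    [MeasurableSpace V] [BorelSpace V] [Fintype ι] (b : OrthonormalBasis ι ℝ E)
    {α : ℝ} (hα₁ : 1 < α) (hα₂ : α < 2)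
    {J : E → ℝ} (hJ : HomogeneousKernel (Module.finrank ℝ E + α) J)
    {B K : ℝ} {q : ℝ → ℝ} (hq : BoundedWave B K q) {d : E → ℝ} (hd : Measurable d) {x e : E}
    {Q : E →L[ℝ] E →L[ℝ] ℝ} (hQ : HasQuadraticExpansion d e Q x)
    {φ : V →ₗᵢ[ℝ] E} (hφ : NormalSlicing e φ) :
    (∀ ε > 0, Integrable (oscIntegrand q J d x e ε)) ∧
    Integrable (fun s => crossCorr (deriv q) (deriv q) s * |s| ^ (1 - α)) ∧
    Tendsto (fun ε => 1 / ε * ∫ p, oscIntegrand q J d x e ε p) (𝓝[>] 0)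
      (𝓝 (1 / 2 * (∫ s, crossCorr (deriv q) (deriv q) s * |s| ^ (1 - α)) *
        Matrix.trace (anisotropyMatrix b J e φ * Matrix.of fun i j => Q (b i) (b j)))) := by
  have hG := hq.crossCorr_deriv
  obtain ⟨β, hβ⟩ : ∃ β, β = Module.finrank ℝ V + α - 1 := ⟨_, rfl⟩
  have hexp : Module.finrank ℝ E + α = β + 2 := by
    rw [hβ, hφ.finrank_eq]
    push_cast
    ring
  rw [hexp] at hJ
  have h₁ : (Module.finrank ℝ V : ℝ) < β := by linarith
  have h₂ : β < Module.finrank ℝ V + 1 := by linarith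
  have hosc : ∀ ε > 0, Integrable (oscIntegrand q J d x e ε) := fun ε hε =>
    integrable_oscIntegrand hq hJ.measurable hd hε
      (integrable_scaledIncrement hφ hG hJ hd hQ h₁ h₂ hε)
  refine ⟨hosc, ?_, ?_⟩
  · rw [← hq.deriv_crossCorr]
    exact integrable_mul_abs_rpow (by linarith) (by linarith) hG.integrable_deriv hG.abs_deriv_le
  · obtain ⟨hlimint, hlim⟩ := tendsto_integral_scaledIncrement hφ hG hJ hd hQ h₁ h₂
    rw [integral_limitIncrement hφ hJ hlimint, hq.deriv_crossCorr,
      show Module.finrank ℝ V + 2 - (β + 2) = 1 - α by rw [hβ]; ring,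
      ← trace_anisotropyMatrix_mul b hφ hJ h₁ Q] at hlim
    exact hlim.congr' (eventually_nhdsWithin_of_forall fun ε hε =>
      (integral_oscIntegrand hq (hosc ε hε)).symm)

/-- **Convergence of the averaged oscillating coefficient: singular kernel case `α ∈ (1,2)`.**
For the kernel `J(z) = g(z/|z|)|z|^{-(N+α)}`, a `C¹` nondecreasing wave `q` with limits
`mminus`, `mplus` and slope decay `q'(r) ≤ C_q (1+|r|)^{-(2+α)}`, and a `1`-Lipschitz phase
`d`, `C²` near `x` with `|Dd| = 1` there, setting `e = ∇d(x)` and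
`W_ε(z) = (d(x+εz) − d(x) − ε e·z)/ε²`, the quantity
`ā_ε = (1/ε) ∬ q'(ξ)[q(ξ + e·z + εW_ε(z)) − q(ξ + e·z)] dξ J(z) dz`
is absolutely convergent for all small `ε > 0` and converges, as `ε → 0⁺`, to
`(1/2) (∫ Φ(s)|s|^{1−α} ds) · tr(M_g(e) D²d(x))`, where `Φ(s) = ∫ q'(ξ)q'(ξ+s) dξ` (the
weighted integral of `Φ` being finite) and
`M_g(e) = ∫_{e^⊥} ((e+u)⊗(e+u)) g((e+u)/|e+u|) (1+|u|²)^{-(N+α)/2} du`, the hyperplane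
`e^⊥ ≅ ℝ^{N-1}` being parametrized by a linear isometry `φ`. -/
theorem stmt_15 (N : ℕ) (hN : 2 ≤ N) (α : ℝ) (hα1 : 1 < α) (hα2 : α < 2)
    (g : EuclideanSpace ℝ (Fin N) → ℝ)
    (hg_cont : ContinuousOn g (sphere (0 : EuclideanSpace ℝ (Fin N)) 1))
    (hg_pos : ∀ θ ∈ sphere (0 : EuclideanSpace ℝ (Fin N)) 1, 0 < g θ)
    (hg_even : ∀ θ ∈ sphere (0 : EuclideanSpace ℝ (Fin N)) 1, g (-θ) = g θ)
    (J : EuclideanSpace ℝ (Fin N) → ℝ)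
    (hJ : ∀ z : EuclideanSpace ℝ (Fin N), z ≠ 0 →
      J z = g (‖z‖⁻¹ • z) * ‖z‖ ^ (-((N : ℝ) + α)))
    (q : ℝ → ℝ) (hq : ContDiff ℝ 1 q) (hq_mono : Monotone q)
    (mminus mplus : ℝ)
    (hbot : Tendsto q atBot (𝓝 mminus)) (htop : Tendsto q atTop (𝓝 mplus))
    (C_q : ℝ) (hCq : 0 < C_q)
    (hdecay : ∀ r : ℝ, deriv q r ≤ C_q * (1 + |r|) ^ (-(2 + α)))
    (d : EuclideanSpace ℝ (Fin N) → ℝ) (hd_lip : LipschitzWith 1 d)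
    (x : EuclideanSpace ℝ (Fin N)) (U : Set (EuclideanSpace ℝ (Fin N)))
    (hU : IsOpen U) (hxU : x ∈ U) (hdU : ContDiffOn ℝ 2 d U)
    (hgrad : ∀ y ∈ U, ‖gradient d y‖ = 1)
    (e : EuclideanSpace ℝ (Fin N)) (he : e = gradient d x)
    (φ : EuclideanSpace ℝ (Fin (N - 1)) →ₗᵢ[ℝ] EuclideanSpace ℝ (Fin N))
    (hφ : LinearMap.range φ.toLinearMap = (ℝ ∙ e)ᗮ) :
    (∃ ε₀ : ℝ, 0 < ε₀ ∧ ∀ ε ∈ Set.Ioo (0 : ℝ) ε₀,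
      Integrable (fun p : EuclideanSpace ℝ (Fin N) × ℝ =>
        deriv q p.2 *
          (q (p.2 + ⟪e, p.1⟫ +
              ε * ((d (x + ε • p.1) - d x - ε * ⟪e, p.1⟫) / ε ^ 2)) -
            q (p.2 + ⟪e, p.1⟫)) * J p.1)) ∧
    Integrable (fun s : ℝ =>
      (∫ ξ : ℝ, deriv q ξ * deriv q (ξ + s)) * |s| ^ (1 - α)) ∧
    Tendsto (fun ε : ℝ =>
        (1 / ε) * ∫ p : EuclideanSpace ℝ (Fin N) × ℝ,
          deriv q p.2 *
            (q (p.2 + ⟪e, p.1⟫ +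
                ε * ((d (x + ε • p.1) - d x - ε * ⟪e, p.1⟫) / ε ^ 2)) -
              q (p.2 + ⟪e, p.1⟫)) * J p.1)
      (𝓝[>] (0 : ℝ))
      (𝓝 ((1 / 2) *
        (∫ s : ℝ, (∫ ξ : ℝ, deriv q ξ * deriv q (ξ + s)) * |s| ^ (1 - α)) *
        Matrix.trace
          ((Matrix.of fun i j : Fin N =>
              ∫ u : EuclideanSpace ℝ (Fin (N - 1)),
                (e + φ u) i * (e + φ u) j *
                  (g (‖e + φ u‖⁻¹ • (e + φ u)) * (1 + ‖u‖ ^ 2) ^ (-((N : ℝ) + α) / 2))) *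
            (Matrix.of fun i j : Fin N =>
              fderiv ℝ (fderiv ℝ d) x (EuclideanSpace.single i 1)
                (EuclideanSpace.single j 1))))) := by
  have hwave : BoundedWave (max |mminus| |mplus|) C_q q := .of_tendsto hq hq_mono hbot htop
    fun r => (hdecay r).trans (mul_le_of_le_one_right hCq.le
      (Real.rpow_le_one_of_one_le_of_nonpos (by simp) (by linarith)))
  have hphase : HasQuadraticExpansion d e (fderiv ℝ (fderiv ℝ d) x) x :=
    he ▸ .of_contDiffAt (hdU.contDiffAt (hU.mem_nhds hxU))
  have hslice : NormalSlicing e φ := ⟨he ▸ hgrad x hxU, hφ⟩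
  have hkernel := HomogeneousKernel.of_sphere hg_cont hg_even hJ
  have hweight : ∀ u, J (e + φ u) =
      g (‖e + φ u‖⁻¹ • (e + φ u)) * (1 + ‖u‖ ^ 2) ^ (-((N : ℝ) + α) / 2) := fun u => by
    rw [hJ _ (hslice.add_ne_zero u), hslice.norm_add_rpow]
  have : Nontrivial (EuclideanSpace ℝ (Fin (N - 1))) :=
    Module.nontrivial_of_finrank_pos (R := ℝ) (by rw [finrank_euclideanSpace_fin]; omega)
  obtain ⟨hint, hcorr, hlim⟩ := stmt_15_general (EuclideanSpace.basisFun (Fin N) ℝ) hα1 hα2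
    (by rwa [finrank_euclideanSpace_fin]) hwave hd_lip.continuous.measurable hphase hslice
  simp only [anisotropyMatrix, EuclideanSpace.basisFun_repr, EuclideanSpace.basisFun_apply,
    hweight] at hlim
  exact ⟨⟨1, one_pos, fun ε hε => hint ε hε.1⟩, hcorr, hlim⟩
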